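/- Every finite-dimensional associative algebra over a field that is not nilpotent (i.e., no power of the algebra is zero) contains a nonzero idempotent element. -/

import Mathlib

/-- `subPow K I n` is the submodule `I^(n+1)`: span of products of `n+1` elements of `I`. -/
def subPow (K : Type*) {A : Type*} [Field K] [NonUnitalRing A] [Module K A]
    [SMulCommClass K A A] [IsScalarTower K A A] (I : Submodule K A) : ℕ → Submodule K A
  | 0 => I
  | n + 1 => Submodule.map₂ (LinearMap.mul K A) (subPow K I n) I

/-!
Adjoin a unit to get `R = K ⊕ A`, a finite-dimensional and hence semiprimary `K`-algebra in which
`A` is an ideal. If `A` lay in the Jacobson radical of `R`, which is nilpotent, it would be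
nilpotent; so `A` has nonzero image in the semisimple quotient of `R` by its radical. Left ideals
of a semisimple ring are generated by idempotents, and idempotents lift from the image of `A` to
`A` itself because the radical is nil.
-/

section Idempotents

variable {R S : Type*} [Ring R] [Ring S]

theorem exists_isIdempotentElem_mem_of_ker_isNilpotent (f : R →+* S)
    (hf : ∀ x ∈ RingHom.ker f, IsNilpotent x) {I : Ideal R} {a : R} (ha : a ∈ I)
    (hfa : IsIdempotentElem (f a)) : ∃ e ∈ I, IsIdempotentElem e ∧ f e = f a := by
  obtain ⟨e, he, hea⟩ :=
    exists_isIdempotentElem_eq_of_ker_isNilpotent f hf (f a) ⟨a, rfl⟩ hfa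
  -- `e` need not lie in `I`, but its conjugate by the unit `1 - (e - a)` does.
  have hker : e - a ∈ RingHom.ker f := by simp [RingHom.mem_ker, hea]
  obtain ⟨u, hu⟩ := (hf _ hker).isUnit_one_sub
  have heu : e * u = e * a := by
    rw [hu, mul_sub, mul_sub, he.eq, mul_one, sub_sub_cancel]
  have hfu : f ↑u⁻¹ = 1 := by
    have hfu_one : f u = 1 := by simp [hu, hea]
    simpa [hfu_one] using (map_mul f ↑u⁻¹ ↑u).symm
  refine ⟨↑u⁻¹ * e * u, ?_, ?_, ?_⟩
  · rw [mul_assoc, heu]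
    exact I.mul_mem_left _ (I.mul_mem_left _ ha)
  · calc ↑u⁻¹ * e * u * (↑u⁻¹ * e * u) = ↑u⁻¹ * (e * e) * u := by
          simp only [mul_assoc, Units.mul_inv_cancel_left]
      _ = ↑u⁻¹ * e * u := by rw [he.eq]
  · rw [mul_assoc, heu, map_mul, map_mul, hfu, one_mul, hea, hfa.eq]

theorem exists_ne_zero_isIdempotentElem_of_not_le_jacobson [IsSemiprimaryRing R] {I : Ideal R}
    (hI : ¬ I ≤ Ring.jacobson R) : ∃ e ∈ I, e ≠ 0 ∧ IsIdempotentElem e := by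
  let π := Ideal.Quotient.mk (Ring.jacobson R)
  have hπ : ∀ x ∈ RingHom.ker π, IsNilpotent x := by
    obtain ⟨n, hn⟩ := IsSemiprimaryRing.isNilpotent (R := R)
    intro x hx
    rw [Ideal.mk_ker] at hx
    exact ⟨n, Ideal.pow_eq_zero_of_mem hn le_rfl hx⟩
  obtain ⟨e', he', hspan⟩ := IsSemisimpleRing.ideal_eq_span_idempotent (I.map π)
  obtain ⟨a, haI, rfl⟩ : ∃ a ∈ I, π a = e' :=
    (Ideal.mem_map_iff_of_surjective π Ideal.Quotient.mk_surjective).mp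
      (hspan ▸ Ideal.mem_span_singleton_self e')
  obtain ⟨e, heI, he, hea⟩ := exists_isIdempotentElem_mem_of_ker_isNilpotent π hπ haI he'
  refine ⟨e, heI, ?_, he⟩
  rintro rfl
  have hmap : I.map π = ⊥ := by
    rw [hspan, ← hea, map_zero, Ideal.span_singleton_zero]
  exact hI (by rwa [Ideal.map_eq_bot_iff_le_ker, Ideal.mk_ker] at hmap)

end Idempotents

section Powers

variable {K A : Type*} [Field K] [NonUnitalRing A] [Module K A]
  [SMulCommClass K A A] [IsScalarTower K A A]

theorem map_mem_pow_of_mem_subPow {B : Type*} [Ring B] [Algebra K B] (f : A →ₙₐ[K] B)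
    {I : Submodule K A} {J : Ideal B} (hIJ : ∀ x ∈ I, f x ∈ J) (n : ℕ) :
    ∀ x ∈ subPow K I n, f x ∈ J ^ (n + 1) := by
  induction n with
  | zero => simpa only [subPow, zero_add, Submodule.pow_one] using hIJ
  | succ n ih =>
    suffices subPow K I (n + 1) ≤
        ((J ^ (n + 2)).restrictScalars K).comap (f : A →ₗ[K] B) from fun x hx ↦ this hx
    refine Submodule.map₂_le.mpr fun x hx y hy ↦ ?_
    change f (x * y) ∈ J ^ (n + 1) * J
    rw [map_mul]
    exact Ideal.mul_mem_mul (ih x hx) (hIJ y hy)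

theorem exists_subPow_eq_bot_of_isNilpotent {B : Type*} [Ring B] [Algebra K B]
    {f : A →ₙₐ[K] B} (hf : Function.Injective f) {I : Submodule K A} {J : Ideal B}
    (hIJ : ∀ x ∈ I, f x ∈ J) (hJ : IsNilpotent J) : ∃ n, subPow K I n = ⊥ := by
  obtain ⟨n, hn⟩ := hJ
  refine ⟨n, (Submodule.eq_bot_iff _).mpr fun x hx ↦ hf ?_⟩
  simpa [Submodule.pow_succ, hn] using map_mem_pow_of_mem_subPow f hIJ n x hx

end Powers

instance finite_unitization {R M : Type*} [Semiring R] [AddCommMonoid M] [Module R M]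
    [Module.Finite R M] : Module.Finite R (Unitization R M) :=
  .of_surjective _ (Unitization.linearEquiv R R M).symm.surjective

theorem stmt0_general {K A : Type*} [Field K] [NonUnitalRing A] [Module K A]
    [SMulCommClass K A A] [IsScalarTower K A A] [IsSemiprimaryRing (Unitization K A)]
    (hnotnil : ¬ ∃ n : ℕ, subPow K (⊤ : Submodule K A) n = ⊥) :
    ∃ a : A, a ≠ 0 ∧ a * a = a := by
  have hker : ¬ RingHom.ker (Unitization.fstHom K A) ≤ Ring.jacobson (Unitization K A) :=
    fun hle ↦ hnotnil <| exists_subPow_eq_bot_of_isNilpotent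
      (f := Unitization.inrNonUnitalAlgHom K A) Unitization.inr_injective
      (fun x _ ↦ hle (Unitization.fst_inr K x)) IsSemiprimaryRing.isNilpotent
  obtain ⟨e, he_fst, he_ne, he⟩ := exists_ne_zero_isIdempotentElem_of_not_le_jacobson hker
  obtain ⟨a, rfl⟩ : ∃ a : A, (a : Unitization K A) = e :=
    ⟨e.snd, Unitization.ext he_fst.symm rfl⟩
  refine ⟨a, fun ha ↦ he_ne (by rw [ha, Unitization.inr_zero]), ?_⟩
  exact Unitization.inr_injective ((Unitization.inr_mul K a a).trans he.eq)

/-- Every finite-dimensional associative algebra over a field which is not nilpotent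
contains a nonzero idempotent element. -/
theorem stmt0 {K A : Type*} [Field K] [NonUnitalRing A] [Module K A]
    [SMulCommClass K A A] [IsScalarTower K A A] [FiniteDimensional K A]
    (hnotnil : ¬ ∃ n : ℕ, subPow K (⊤ : Submodule K A) n = ⊥) :
    ∃ a : A, a ≠ 0 ∧ a * a = a := by
  have := IsArtinianRing.of_finite K (Unitization K A)
  exact stmt0_general hnotnil
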